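/- Let x ∈ C⁴(I;ℝ²) with c₀ ≤ |x_ρ| ≤ C₀, τ = x_ρ/|x_ρ|, and τ_j = δx_j/|δx_j| the discrete tangents on the uniform grid ρ_j = jh. Then τ_j + τ_{j+1} = 2τ(ρ_j) + O(h²): there exists C such that |τ_j + τ_{j+1} − 2τ(ρ_j)| ≤ C h² for all j and small h. -/

import Mathlib

open scoped RealInnerProductSpace
open Set

noncomputable section

abbrev E2 := EuclideanSpace ℝ (Fin 2)

/-- Clockwise rotation through π/2. -/
def rot (v : E2) : E2 := (WithLp.equiv 2 (Fin 2 → ℝ)).symm ![v 1, -v 0]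

/-!
The chords `a = x s - x (s - h)` and `b = x (s + h) - x s` satisfy `‖a - b‖ = O(h²)` (second
difference), `‖a + b - 2h x'(s)‖ = O(h³)` (central difference), and both have length at least a
multiple of `h`. In an inner product space the parallelogram law makes `a/‖a‖ + b/‖b‖` differ from
twice the direction of `a + b` by at most `‖a - b‖² / (‖a‖ ‖b‖) = O(h²)`; replacing `a + b` by
`2h x'(s)` changes the direction by `O(h³) / h`.
-/

open NormedSpace
open scoped NNReal

section Normalize

variable {E : Type*} [NormedAddCommGroup E]

lemma norm_normalize_le_one [NormedSpace ℝ E] (a : E) : ‖normalize a‖ ≤ 1 := by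
  rcases eq_or_ne a 0 with rfl | ha
  · simp
  · exact (norm_normalize ha).le

lemma norm_mul_norm_normalize_sub_normalize_le [NormedSpace ℝ E] (a b : E) :
    ‖b‖ * ‖normalize a - normalize b‖ ≤ 2 * ‖a - b‖ := by
  have hsplit : ‖b‖ • (normalize a - normalize b) = (‖b‖ - ‖a‖) • normalize a + (a - b) := by
    linear_combination (norm := module) norm_smul_normalize a - norm_smul_normalize b
  calc ‖b‖ * ‖normalize a - normalize b‖
      = ‖(‖b‖ - ‖a‖) • normalize a + (a - b)‖ := by rw [← hsplit, norm_smul, norm_norm]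
    _ ≤ |‖b‖ - ‖a‖| * ‖normalize a‖ + ‖a - b‖ := by
        rw [← Real.norm_eq_abs, ← norm_smul]
        exact norm_add_le _ _
    _ ≤ ‖a - b‖ * 1 + ‖a - b‖ := by
        gcongr
        · rw [norm_sub_rev]
          exact abs_norm_sub_norm_le b a
        · exact norm_normalize_le_one a
    _ = 2 * ‖a - b‖ := by ring

variable [InnerProductSpace ℝ E]

lemma abs_add_norm_mul_norm_add_sub_le (a b : E) :
    |(‖a‖ + ‖b‖) * ‖a + b‖ - 4 * (‖a‖ * ‖b‖)| ≤ ‖a - b‖ ^ 2 := by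
  have hparallelogram := parallelogram_law_with_norm ℝ a b
  have htriangle := norm_add_le a b
  have hdiff : (‖a‖ - ‖b‖) ^ 2 ≤ ‖a - b‖ ^ 2 := sq_le_sq.mpr <| by
    simpa using abs_norm_sub_norm_le a b
  have hlower : ‖a + b‖ ^ 2 ≤ (‖a‖ + ‖b‖) * ‖a + b‖ := by
    rw [sq]
    gcongr
  have hupper : (‖a‖ + ‖b‖) * ‖a + b‖ ≤ (‖a‖ + ‖b‖) ^ 2 := by
    rw [sq]
    gcongr
  rw [abs_le]
  constructor
  · linarith [sq_nonneg (‖a‖ - ‖b‖)]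
  · linarith

lemma norm_mul_norm_mul_norm_normalize_add_normalize_sub_le (a b : E) :
    ‖a‖ * ‖b‖ * ‖normalize a + normalize b - (2 : ℝ) • normalize (a + b)‖ ≤ ‖a - b‖ ^ 2 := by
  have hsplit : (2 * (‖a‖ * ‖b‖)) • (normalize a + normalize b - (2 : ℝ) • normalize (a + b))
      = ((‖a‖ + ‖b‖) * ‖a + b‖ - 4 * (‖a‖ * ‖b‖)) • normalize (a + b)
        + (‖b‖ - ‖a‖) • (a - b) := by
    linear_combination (norm := module) (2 * ‖b‖) • norm_smul_normalize a
      + (2 * ‖a‖) • norm_smul_normalize b - (‖a‖ + ‖b‖) • norm_smul_normalize (a + b)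
  have hdiff : |‖b‖ - ‖a‖| ≤ ‖a - b‖ := by
    rw [norm_sub_rev]
    exact abs_norm_sub_norm_le b a
  have htwice := calc
    2 * (‖a‖ * ‖b‖) * ‖normalize a + normalize b - (2 : ℝ) • normalize (a + b)‖
      = ‖((‖a‖ + ‖b‖) * ‖a + b‖ - 4 * (‖a‖ * ‖b‖)) • normalize (a + b)
          + (‖b‖ - ‖a‖) • (a - b)‖ := by
        rw [← hsplit, norm_smul, Real.norm_of_nonneg (by positivity)]
    _ ≤ |(‖a‖ + ‖b‖) * ‖a + b‖ - 4 * (‖a‖ * ‖b‖)| * ‖normalize (a + b)‖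
          + |‖b‖ - ‖a‖| * ‖a - b‖ := by
        simpa only [norm_smul, Real.norm_eq_abs] using norm_add_le
          (((‖a‖ + ‖b‖) * ‖a + b‖ - 4 * (‖a‖ * ‖b‖)) • normalize (a + b)) ((‖b‖ - ‖a‖) • (a - b))
    _ ≤ ‖a - b‖ ^ 2 * 1 + ‖a - b‖ * ‖a - b‖ := by
        gcongr
        · exact abs_add_norm_mul_norm_add_sub_le a b
        · exact norm_normalize_le_one _
  linarith

lemma norm_normalize_add_normalize_sub_two_smul_normalize_le {a b p : E}
    (ha : a ≠ 0) (hb : b ≠ 0) (hp : p ≠ 0) :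
    ‖normalize a + normalize b - (2 : ℝ) • normalize p‖
      ≤ ‖a - b‖ ^ 2 / (‖a‖ * ‖b‖) + 4 * ‖a + b - p‖ / ‖p‖ := by
  have hsum : ‖normalize a + normalize b - (2 : ℝ) • normalize (a + b)‖
      ≤ ‖a - b‖ ^ 2 / (‖a‖ * ‖b‖) := by
    rw [le_div_iff₀' (by positivity)]
    exact norm_mul_norm_mul_norm_normalize_add_normalize_sub_le a b
  have hdir : ‖(2 : ℝ) • (normalize (a + b) - normalize p)‖ ≤ 4 * ‖a + b - p‖ / ‖p‖ := by
    rw [norm_smul, Real.norm_two, le_div_iff₀' (by positivity)]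
    linarith [norm_mul_norm_normalize_sub_normalize_le (a + b) p]
  refine (norm_add_le_of_le hsum hdir).trans' (le_of_eq ?_)
  congr 1
  module

end Normalize

section DifferenceQuotients

variable {E : Type*} [NormedAddCommGroup E] [NormedSpace ℝ E] {f : ℝ → E} {K L : ℝ≥0}

lemma norm_le_of_norm_deriv_le_mul_pow {g g' : ℝ → E} {C t : ℝ} (n : ℕ)
    (hg : ∀ r, HasDerivAt g (g' r) r) (hg0 : g 0 = 0)
    (hbound : ∀ r, 0 ≤ r → ‖g' r‖ ≤ C * r ^ n) (ht : 0 ≤ t) :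
    ‖g t‖ ≤ C / (n + 1) * t ^ (n + 1) := by
  have hpow : ∀ r : ℝ, HasDerivAt (fun r => C / (n + 1) * r ^ (n + 1)) (C * r ^ n) r := fun r => by
    refine ((hasDerivAt_pow (n + 1) r).const_mul (C / (n + 1))).congr_deriv ?_
    rw [Nat.add_sub_cancel]
    push_cast
    field_simp
  exact image_norm_le_of_norm_deriv_right_le_deriv_boundary
    (fun r _ => (hg r).continuousAt.continuousWithinAt)
    (fun r _ => (hg r).hasDerivWithinAt) (by simp [hg0]) hpow
    (fun r hr => hbound r hr.1) (right_mem_Icc.mpr ht)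

lemma norm_sub_sub_smul_deriv_le (hf : Differentiable ℝ f) (hK : LipschitzWith K (deriv f))
    (s : ℝ) {t : ℝ} (ht : 0 ≤ t) :
    ‖f (s + t) - f s - t • deriv f s‖ ≤ K / 2 * t ^ 2 := by
  have hg : ∀ r, HasDerivAt (fun r => f (s + r) - f s - r • deriv f s)
      (deriv f (s + r) - deriv f s) r := fun r => by
    simpa [Pi.sub_def] using (((hf (s + r)).hasDerivAt.comp_const_add s r).sub_const (f s)).sub
      ((hasDerivAt_id r).smul_const (deriv f s))
  have hbound : ∀ r, 0 ≤ r → ‖deriv f (s + r) - deriv f s‖ ≤ K * r ^ 1 := fun r hr => by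
    simpa [abs_of_nonneg hr] using hK.norm_sub_le (s + r) s
  simpa [one_add_one_eq_two] using norm_le_of_norm_deriv_le_mul_pow 1 hg (by simp) hbound ht

lemma mul_norm_deriv_sub_le_norm_sub (hf : Differentiable ℝ f) (hK : LipschitzWith K (deriv f))
    (s : ℝ) {t : ℝ} (ht : 0 ≤ t) :
    t * ‖deriv f s‖ - K / 2 * t ^ 2 ≤ ‖f (s + t) - f s‖ := by
  have hrev := norm_sub_norm_le (t • deriv f s) (f (s + t) - f s)
  rw [norm_sub_rev (t • _), norm_smul, Real.norm_of_nonneg ht] at hrev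
  linarith [norm_sub_sub_smul_deriv_le hf hK s ht]

lemma norm_second_difference_le (hf : Differentiable ℝ f) (hK : LipschitzWith K (deriv f))
    (s : ℝ) {t : ℝ} (ht : 0 ≤ t) :
    ‖f (s + t) + f (s - t) - (2 : ℝ) • f s‖ ≤ K * t ^ 2 := by
  have hg : ∀ r, HasDerivAt (fun r => f (s + r) + f (s - r) - (2 : ℝ) • f s)
      (deriv f (s + r) - deriv f (s - r)) r := fun r => by
    simpa [sub_eq_add_neg] using (((hf (s + r)).hasDerivAt.comp_const_add s r).add
      ((hf (s - r)).hasDerivAt.comp_const_sub s r)).sub_const ((2 : ℝ) • f s)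
  have hbound : ∀ r, 0 ≤ r → ‖deriv f (s + r) - deriv f (s - r)‖ ≤ 2 * K * r ^ 1 := fun r hr => by
    refine (hK.norm_sub_le (s + r) (s - r)).trans_eq ?_
    rw [add_sub_sub_cancel, Real.norm_of_nonneg (by positivity)]
    ring
  simpa [one_add_one_eq_two] using
    norm_le_of_norm_deriv_le_mul_pow 1 hg (by simp [two_smul]) hbound ht

lemma norm_central_difference_sub_le (hf : Differentiable ℝ f)
    (hf' : Differentiable ℝ (deriv f)) (hL : LipschitzWith L (deriv (deriv f)))
    (s : ℝ) {t : ℝ} (ht : 0 ≤ t) :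
    ‖f (s + t) - f (s - t) - (2 * t) • deriv f s‖ ≤ L / 3 * t ^ 3 := by
  have hg : ∀ r, HasDerivAt (fun r => f (s + r) - f (s - r) - (2 * r) • deriv f s)
      (deriv f (s + r) + deriv f (s - r) - (2 : ℝ) • deriv f s) r := fun r => by
    simpa [Pi.sub_def] using (((hf (s + r)).hasDerivAt.comp_const_add s r).sub
      ((hf (s - r)).hasDerivAt.comp_const_sub s r)).sub
      (((hasDerivAt_id r).const_mul 2).smul_const (deriv f s))
  refine (norm_le_of_norm_deriv_le_mul_pow 2 hg (by simp)
    (fun r hr => norm_second_difference_le hf' hL s hr) ht).trans_eq ?_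
  norm_num

end DifferenceQuotients

section Periodic

lemma periodic_deriv {𝕜 F : Type*} [NontriviallyNormedField 𝕜] [NormedAddCommGroup F]
    [NormedSpace 𝕜 F] {f : 𝕜 → F} {T : 𝕜} (hf : Function.Periodic f T) :
    Function.Periodic (deriv f) T := fun s => by
  rw [← deriv_comp_add_const, funext hf]

lemma exists_lipschitzWith_of_periodic {E : Type*} [NormedAddCommGroup E] [NormedSpace ℝ E]
    {f : ℝ → E} {T : ℝ} (hf : ContDiff ℝ 1 f) (hper : Function.Periodic f T) (hT : T ≠ 0) :
    ∃ K, LipschitzWith K f := by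
  obtain ⟨K, hK, hbound⟩ := ((periodic_deriv hper).isBounded_of_continuous hT
    hf.continuous_deriv_one).exists_pos_norm_le
  exact ⟨⟨K, hK.le⟩, lipschitzWith_of_nnnorm_deriv_le (hf.differentiable one_ne_zero)
    fun s => hbound _ (mem_range_self s)⟩

end Periodic

section UnitTangent

variable {E : Type*} [NormedAddCommGroup E] [InnerProductSpace ℝ E] {x : ℝ → E} {c : ℝ} {K L : ℝ≥0}

lemma norm_normalize_secants_sub_normalize_deriv_le (hc : 0 < c) (hx : Differentiable ℝ x)
    (hx' : Differentiable ℝ (deriv x)) (hK : LipschitzWith K (deriv x))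
    (hL : LipschitzWith L (deriv (deriv x))) (hlow : ∀ s, c ≤ ‖deriv x s‖) {h : ℝ} (hh : 0 < h)
    (hKh : K * h ≤ c) (s : ℝ) :
    ‖normalize (x s - x (s - h)) + normalize (x (s + h) - x s) - (2 : ℝ) • normalize (deriv x s)‖
      ≤ (4 * K ^ 2 / c ^ 2 + 2 * L / (3 * c)) * h ^ 2 := by
  have hsecant : ∀ r, c * h / 2 ≤ ‖x (r + h) - x r‖ := fun r => by
    linarith [mul_norm_deriv_sub_le_norm_sub hx hK r hh.le,
      mul_le_mul_of_nonneg_left (hlow r) hh.le, mul_le_mul_of_nonneg_left hKh hh.le]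
  have hforward := hsecant s
  have hbackward := hsecant (s - h)
  rw [sub_add_cancel] at hbackward
  have htangent : 2 * h * c ≤ ‖(2 * h) • deriv x s‖ := by
    rw [norm_smul, Real.norm_of_nonneg (by positivity)]
    gcongr
    exact hlow s
  have hdiff : ‖x s - x (s - h) - (x (s + h) - x s)‖ ≤ K * h ^ 2 := by
    rw [norm_sub_rev]
    convert norm_second_difference_le hx hK s hh.le using 1
    congr 1
    module
  have hsum : ‖x s - x (s - h) + (x (s + h) - x s) - (2 * h) • deriv x s‖ ≤ L / 3 * h ^ 3 := by
    rw [sub_add_sub_cancel']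
    exact norm_central_difference_sub_le hx hx' hL s hh.le
  have hch : 0 < c * h := by positivity
  rw [← normalize_smul_of_pos (by positivity : 0 < 2 * h) (deriv x s)]
  refine (norm_normalize_add_normalize_sub_two_smul_normalize_le
    (norm_pos_iff.mp (by linarith)) (norm_pos_iff.mp (by linarith))
    (norm_pos_iff.mp (by linarith))).trans ?_
  calc _ ≤ (K * h ^ 2) ^ 2 / (c * h / 2 * (c * h / 2)) + 4 * (L / 3 * h ^ 3) / (2 * h * c) := by
        gcongr
    _ = (4 * K ^ 2 / c ^ 2 + 2 * L / (3 * c)) * h ^ 2 := by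
        field_simp
        ring

theorem discrete_tangent_consistency_general (hc : 0 < c) (hx : Differentiable ℝ x)
    (hx' : Differentiable ℝ (deriv x)) (hK : LipschitzWith K (deriv x))
    (hL : LipschitzWith L (deriv (deriv x))) (hlow : ∀ s, c ≤ ‖deriv x s‖) :
    ∃ C > 0, ∃ h₀ > 0, ∀ h : ℝ, 0 < h → h ≤ h₀ → ∀ s,
      ‖normalize (x s - x (s - h)) + normalize (x (s + h) - x s)
        - (2 : ℝ) • normalize (deriv x s)‖ ≤ C * h ^ 2 := by
  refine ⟨4 * K ^ 2 / c ^ 2 + 2 * L / (3 * c) + 1, by positivity, c / (K + 1), by positivity,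
    fun h hh hh₀ s => ?_⟩
  rw [le_div_iff₀' (by positivity)] at hh₀
  refine (norm_normalize_secants_sub_normalize_deriv_le hc hx hx' hK hL hlow hh
    (by linarith) s).trans ?_
  exact mul_le_mul_of_nonneg_right (le_add_of_nonneg_right zero_le_one) (sq_nonneg h)

end UnitTangent

/-- second order consistency of the averaged discrete tangents:
`τ_j + τ_{j+1} = 2τ(ρ_j) + O(h²)`, where `τ_j = δx_j/|δx_j|` and `τ = x_ρ/|x_ρ|`. -/
theorem discrete_tangent_consistency
    (x : ℝ → E2) (c₀ C₀ : ℝ) (hc₀ : 0 < c₀) (hcC : c₀ ≤ C₀)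
    (hx : ContDiff ℝ 4 x)
    (hper : ∀ ρ, x (ρ + 1) = x ρ)
    (hlow : ∀ ρ, c₀ ≤ ‖deriv x ρ‖) (hup : ∀ ρ, ‖deriv x ρ‖ ≤ C₀) :
    ∃ C > (0:ℝ), ∃ hstar > (0:ℝ), ∀ J : ℕ, 0 < J → (1:ℝ)/J ≤ hstar → ∀ j : ℤ,
      ‖(‖x (j * ((1:ℝ)/J)) - x ((j-1) * ((1:ℝ)/J))‖⁻¹ •
          (x (j * ((1:ℝ)/J)) - x ((j-1) * ((1:ℝ)/J)))
        + ‖x ((j+1) * ((1:ℝ)/J)) - x (j * ((1:ℝ)/J))‖⁻¹ •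
          (x ((j+1) * ((1:ℝ)/J)) - x (j * ((1:ℝ)/J)))
        - (2:ℝ) • (‖deriv x (j * ((1:ℝ)/J))‖⁻¹ • deriv x (j * ((1:ℝ)/J))))‖
      ≤ C * ((1:ℝ)/J) ^ 2 := by
  have hx' : ContDiff ℝ 3 (deriv x) := ContDiff.deriv' hx
  have hx'' : ContDiff ℝ 2 (deriv (deriv x)) := ContDiff.deriv' hx'
  obtain ⟨K, hK⟩ := exists_lipschitzWith_of_periodic (hx'.of_le (by norm_num))
    (periodic_deriv hper) one_ne_zero
  obtain ⟨L, hL⟩ := exists_lipschitzWith_of_periodic (hx''.of_le (by norm_num))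
    (periodic_deriv (periodic_deriv hper)) one_ne_zero
  obtain ⟨C, hC, h₀, hh₀, hbound⟩ := discrete_tangent_consistency_general hc₀
    (hx.differentiable (by norm_num)) (hx'.differentiable (by norm_num)) hK hL hlow
  refine ⟨C, hC, h₀, hh₀, fun J hJ hJh j => ?_⟩
  rw [sub_one_mul, add_one_mul]
  exact hbound _ (by positivity) hJh _
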